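/- arXiv:1106.5598 — 2 statements merged into one kernel-verified Lean document; each statement's English description precedes it below -/
import Mathlib

section
/- Let n ≥ 2 be an integer and set m = n + 2. For every measurable function G : [0,1] → [0,1], ∫₀¹ h_x(G(x)) dx ≥ ∫₀¹ h_x(x) dx, where h_x(y) = m·((1−x)^{n−1} y^{m−1}(1−y) + x^{n−1} y (1−y)^{m−1}) + (1−x)^{n−1} y^m + x^{n−1} (1−y)^m, with equality if and only if G(x) = x for Lebesgue-almost every x ∈ [0,1]. -/
/-!
The inequality already holds pointwise: `y = x` is the unique minimizer of `h_x` on `[0, 1]`.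
Indeed `h_x(y) = (1 - x) ^ (n - 1) * P_m(y) + x ^ (n - 1) * P_m(1 - y)`, where `P_m(y)` is the
probability that at least `m - 1` of `m` independent events of probability `y` occur, and
differentiating `P_m` telescopes to `m (m - 1) y ^ (m - 2) (1 - y)`. When `m = n + 2` the exponents
`n - 1` and `m - 3` agree, so that
`∂h_x(y)/∂y = m (m - 1) y (1 - y) (((1 - x) y) ^ (n - 1) - (x (1 - y)) ^ (n - 1))`,
which has the sign of `(1 - x) y - x (1 - y) = y - x`.
-/

open MeasureTheory

open Set Filter

theorem lt_of_deriv_neg_of_deriv_pos {D : Set ℝ} (hD : Convex ℝ D) {f : ℝ → ℝ}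
    (hf : ContinuousOn f D) {c : ℝ} (hc : c ∈ D)
    (hneg : ∀ y ∈ interior D, y < c → deriv f y < 0)
    (hpos : ∀ y ∈ interior D, c < y → 0 < deriv f y)
    {y : ℝ} (hy : y ∈ D) (hyc : y ≠ c) : f c < f y := by
  rcases hyc.lt_or_gt with hlt | hgt
  · have hanti : StrictAntiOn f (D ∩ Iic c) := by
      refine strictAntiOn_of_deriv_neg (hD.inter (convex_Iic c)) (hf.mono inter_subset_left) ?_
      rw [interior_inter, interior_Iic]
      exact fun z hz ↦ hneg z hz.1 hz.2
    exact hanti ⟨hy, hlt.le⟩ ⟨hc, self_mem_Iic⟩ hlt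
  · have hmono : StrictMonoOn f (D ∩ Ici c) := by
      refine strictMonoOn_of_deriv_pos (hD.inter (convex_Ici c)) (hf.mono inter_subset_left) ?_
      rw [interior_inter, interior_Ici]
      exact fun z hz ↦ hpos z hz.1 hz.2
    exact hmono ⟨hc, self_mem_Ici⟩ ⟨hy, hgt.le⟩ hgt

theorem integrable_comp_of_continuous_of_ae_mem_isCompact {α X E : Type*} [MeasurableSpace α]
    {μ : Measure α} [IsFiniteMeasure μ] [TopologicalSpace X] [NormedAddCommGroup E]
    {φ : X → E} (hφ : Continuous φ) {K : Set X} (hK : IsCompact K)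
    {f : α → X} (hf : AEStronglyMeasurable f μ) (hfK : ∀ᵐ a ∂μ, f a ∈ K) :
    Integrable (fun a ↦ φ (f a)) μ := by
  obtain ⟨C, hC⟩ := hK.exists_bound_of_continuousOn hφ.continuousOn
  exact .of_bound (hφ.comp_aestronglyMeasurable hf) C (hfK.mono fun a ha ↦ hC (f a) ha)

/-- The probability `P_m(y)` that at least `m - 1` of `m` independent events of probability `y`
occur, for `m ≠ 0`; through it `h_x` is a combination of `P_m(y)` and `P_m(1 - y)`. -/
def binomialTail (m : ℕ) (y : ℝ) : ℝ :=
  m * y ^ (m - 1) * (1 - y) + y ^ m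

theorem hasDerivAt_binomialTail (m : ℕ) (y : ℝ) :
    HasDerivAt (binomialTail m) (m * (m - 1) * (y ^ (m - 2) * (1 - y))) y := by
  have hderiv : HasDerivAt (binomialTail m)
      (m * ((m - 1 : ℕ) * y ^ (m - 1 - 1)) * (1 - y) + m * y ^ (m - 1) * (-1)
        + m * y ^ (m - 1)) y :=
    (((hasDerivAt_pow (m - 1) y).const_mul (m : ℝ)).mul ((hasDerivAt_id y).const_sub 1)).add
      (hasDerivAt_pow m y)
  refine hderiv.congr_deriv ?_
  obtain rfl | hm := eq_or_ne m 0
  · simp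
  · rw [Nat.cast_pred (Nat.pos_of_ne_zero hm), Nat.sub_sub]
    ring

/-- The integrand `h_x(y)`: for `0 < n < m`, `n * ∫₀¹ h_x(G x) dx` is the probability that the
two-sample Kolmogorov–Smirnov statistic `D_{n,m}` is at least `1 - 1 / m`, when the sample of size
`n` is uniform on `[0, 1]` and the sample of size `m` has cdf `G`. The truncated exponents `n - 1`
and `m - 1` are the intended ones only for positive `n` and `m`. -/
def ksIntegrand (n m : ℕ) (x y : ℝ) : ℝ :=
  m * ((1 - x) ^ (n - 1) * y ^ (m - 1) * (1 - y) + x ^ (n - 1) * y * (1 - y) ^ (m - 1)) +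
    (1 - x) ^ (n - 1) * y ^ m + x ^ (n - 1) * (1 - y) ^ m

theorem ksIntegrand_eq_binomialTail (n m : ℕ) (x y : ℝ) :
    ksIntegrand n m x y =
      (1 - x) ^ (n - 1) * binomialTail m y + x ^ (n - 1) * binomialTail m (1 - y) := by
  simp only [ksIntegrand, binomialTail]
  ring

theorem continuous_uncurry_ksIntegrand (n m : ℕ) :
    Continuous (Function.uncurry (ksIntegrand n m)) := by
  unfold Function.uncurry ksIntegrand
  fun_prop

theorem hasDerivAt_ksIntegrand (n m : ℕ) (x y : ℝ) :
    HasDerivAt (ksIntegrand n m x)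
      (m * (m - 1) * ((1 - x) ^ (n - 1) * (y ^ (m - 2) * (1 - y)) -
        x ^ (n - 1) * ((1 - y) ^ (m - 2) * y))) y := by
  have htail : HasDerivAt (fun z ↦ binomialTail m (1 - z))
      (-(m * (m - 1) * ((1 - y) ^ (m - 2) * (1 - (1 - y))))) y :=
    (hasDerivAt_binomialTail m (1 - y)).comp_const_sub 1 y
  rw [funext (ksIntegrand_eq_binomialTail n m x)]
  refine (((hasDerivAt_binomialTail m y).const_mul ((1 - x) ^ (n - 1))).add
    (htail.const_mul (x ^ (n - 1)))).congr_deriv ?_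
  ring

theorem deriv_ksIntegrand_add_two {n : ℕ} (hn : n ≠ 0) (x y : ℝ) :
    deriv (ksIntegrand n (n + 2) x) y =
      (n + 2) * (n + 1) * (y * (1 - y)) *
        (((1 - x) * y) ^ (n - 1) - (x * (1 - y)) ^ (n - 1)) := by
  obtain ⟨k, rfl⟩ := Nat.exists_eq_succ_of_ne_zero hn
  rw [(hasDerivAt_ksIntegrand _ _ x y).deriv]
  simp only [Nat.succ_eq_add_one, Nat.add_sub_cancel, mul_pow]
  push_cast
  ring

theorem deriv_ksIntegrand_neg {n : ℕ} (hn : 2 ≤ n) {x y : ℝ} (hx : x ≤ 1)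
    (hy : y ∈ Ioo (0 : ℝ) 1) (hyx : y < x) : deriv (ksIntegrand n (n + 2) x) y < 0 := by
  have hy' : 0 < 1 - y := sub_pos.2 hy.2
  have hpow : ((1 - x) * y) ^ (n - 1) < (x * (1 - y)) ^ (n - 1) :=
    pow_lt_pow_left₀ (by linarith) (mul_nonneg (sub_nonneg.2 hx) hy.1.le) (by lia)
  rw [deriv_ksIntegrand_add_two (by lia)]
  exact mul_neg_of_pos_of_neg (mul_pos (by positivity) (mul_pos hy.1 hy')) (sub_neg.2 hpow)

theorem deriv_ksIntegrand_pos {n : ℕ} (hn : 2 ≤ n) {x y : ℝ} (hx : 0 ≤ x)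
    (hy : y ∈ Ioo (0 : ℝ) 1) (hxy : x < y) : 0 < deriv (ksIntegrand n (n + 2) x) y := by
  have hy' : 0 < 1 - y := sub_pos.2 hy.2
  have hpow : (x * (1 - y)) ^ (n - 1) < ((1 - x) * y) ^ (n - 1) :=
    pow_lt_pow_left₀ (by linarith) (mul_nonneg hx hy'.le) (by lia)
  rw [deriv_ksIntegrand_add_two (by lia)]
  exact mul_pos (mul_pos (by positivity) (mul_pos hy.1 hy')) (sub_pos.2 hpow)

theorem ksIntegrand_self_lt {n : ℕ} (hn : 2 ≤ n) {x y : ℝ} (hx : x ∈ Icc (0 : ℝ) 1)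
    (hy : y ∈ Icc (0 : ℝ) 1) (hyx : y ≠ x) :
    ksIntegrand n (n + 2) x x < ksIntegrand n (n + 2) x y := by
  refine lt_of_deriv_neg_of_deriv_pos (convex_Icc 0 1)
    ((continuous_uncurry_ksIntegrand n (n + 2)).uncurry_left x).continuousOn hx ?_ ?_ hy hyx
  all_goals rw [interior_Icc]
  · exact fun z hz ↦ deriv_ksIntegrand_neg hn hx.2 hz
  · exact fun z hz ↦ deriv_ksIntegrand_pos hn hx.1 hz

theorem ksIntegrand_self_eq_iff {n : ℕ} (hn : 2 ≤ n) {x y : ℝ} (hx : x ∈ Icc (0 : ℝ) 1)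
    (hy : y ∈ Icc (0 : ℝ) 1) :
    ksIntegrand n (n + 2) x x = ksIntegrand n (n + 2) x y ↔ y = x :=
  ⟨fun h ↦ of_not_not fun hyx ↦ (ksIntegrand_self_lt hn hx hy hyx).ne h, fun h ↦ by rw [h]⟩

theorem ksIntegrand_self_le {n : ℕ} (hn : 2 ≤ n) {x y : ℝ} (hx : x ∈ Icc (0 : ℝ) 1)
    (hy : y ∈ Icc (0 : ℝ) 1) :
    ksIntegrand n (n + 2) x x ≤ ksIntegrand n (n + 2) x y := by
  obtain rfl | hyx := eq_or_ne y x
  · rfl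
  · exact (ksIntegrand_self_lt hn hx hy hyx).le

section

variable {α : Type*} [MeasurableSpace α] {μ : Measure α} [IsFiniteMeasure μ] {f g : α → ℝ}

theorem integrable_ksIntegrand (n m : ℕ) (hf : AEMeasurable f μ) (hg : AEMeasurable g μ)
    (hf01 : ∀ᵐ a ∂μ, f a ∈ Icc (0 : ℝ) 1) (hg01 : ∀ᵐ a ∂μ, g a ∈ Icc (0 : ℝ) 1) :
    Integrable (fun a ↦ ksIntegrand n m (f a) (g a)) μ :=
  integrable_comp_of_continuous_of_ae_mem_isCompact (f := fun a ↦ (f a, g a))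
    (continuous_uncurry_ksIntegrand n m) (isCompact_Icc.prod isCompact_Icc)
    (hf.prodMk hg).aestronglyMeasurable (hf01.and hg01)

theorem ks_unbiased_m_eq_n_add_two_general {n : ℕ} (hn : 2 ≤ n) (hf : AEMeasurable f μ)
    (hg : AEMeasurable g μ) (hf01 : ∀ᵐ a ∂μ, f a ∈ Icc (0 : ℝ) 1)
    (hg01 : ∀ᵐ a ∂μ, g a ∈ Icc (0 : ℝ) 1) :
    (∫ a, ksIntegrand n (n + 2) (f a) (g a) ∂μ ≥ ∫ a, ksIntegrand n (n + 2) (f a) (f a) ∂μ) ∧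
    ((∫ a, ksIntegrand n (n + 2) (f a) (g a) ∂μ = ∫ a, ksIntegrand n (n + 2) (f a) (f a) ∂μ) ↔
      ∀ᵐ a ∂μ, g a = f a) := by
  have hff := integrable_ksIntegrand n (n + 2) hf hf hf01 hf01
  have hfg := integrable_ksIntegrand n (n + 2) hf hg hf01 hg01
  have hle : ∀ᵐ a ∂μ, ksIntegrand n (n + 2) (f a) (f a) ≤ ksIntegrand n (n + 2) (f a) (g a) := by
    filter_upwards [hf01, hg01] with a using ksIntegrand_self_le hn
  refine ⟨integral_mono_ae hff hfg hle, ?_⟩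
  rw [eq_comm, integral_eq_iff_of_ae_le hff hfg hle]
  refine eventually_congr ?_
  filter_upwards [hf01, hg01] with a using ksIntegrand_self_eq_iff hn

end

/-- Unbiasedness half of Theorem 3 for `m = n + 2`: for every measurable `G : [0,1] → [0,1]`,
`∫₀¹ h_x(G(x)) dx ≥ ∫₀¹ h_x(x) dx`, where
`h_x(y) = m((1−x)^{n−1} y^{m−1}(1−y) + x^{n−1} y(1−y)^{m−1}) + (1−x)^{n−1} y^m + x^{n−1}(1−y)^m`
with `m = n + 2`, with equality iff `G(x) = x` for a.e. `x ∈ [0,1]`. -/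
theorem ks_unbiased_m_eq_n_add_two (n : ℕ) (hn : 2 ≤ n)
    (G : ℝ → ℝ) (hGmeas : Measurable G)
    (hG : ∀ x ∈ Set.Icc (0:ℝ) 1, G x ∈ Set.Icc (0:ℝ) 1) :
    let m : ℕ := n + 2
    let h : ℝ → ℝ → ℝ := fun x y =>
      m * ((1 - x) ^ (n - 1) * y ^ (m - 1) * (1 - y) + x ^ (n - 1) * y * (1 - y) ^ (m - 1)) +
        (1 - x) ^ (n - 1) * y ^ m + x ^ (n - 1) * (1 - y) ^ m
    (∫ x in Set.Icc (0:ℝ) 1, h x (G x) ≥ ∫ x in Set.Icc (0:ℝ) 1, h x x) ∧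
    ((∫ x in Set.Icc (0:ℝ) 1, h x (G x) = ∫ x in Set.Icc (0:ℝ) 1, h x x) ↔
      (∀ᵐ x ∂(volume.restrict (Set.Icc (0:ℝ) 1)), G x = x)) :=
  ks_unbiased_m_eq_n_add_two_general hn aemeasurable_id hGmeas.aemeasurable
    (ae_restrict_mem measurableSet_Icc) (ae_restrict_of_forall_mem measurableSet_Icc hG)
end

section
/- For every measurable function G : [0,1] → [0,1], 105·∫₀¹ (x⁴(1−x)²(1−G(x))³ + x²(1−x)⁴ G(x)³) dx ≥ 1/6, with equality if G(x) = x for all x ∈ [0,1]. -/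
/-!
Write `n = 2l + k + 1` for the size of the uniform sample and `k + 1` for that of the other. For
fixed `x ∈ [0,1]` the integrand, as a function of `g = G x`, lies above the sum of the tangents at
`g = x` of its two convex terms. Thanks to the weights `x ^ k` and `(1 - x) ^ k` the slopes of these
tangents cancel, so the integrand is minimal at `g = x`, where it is `(x * (1 - x)) ^ (l + k)`. The
integral of this is the Beta value `B(l + k + 1, l + k + 1)`; for `l = k = 2` it is `1 / 630`.
-/

open MeasureTheory

open scoped Nat

theorem mul_pow_mul_add_le_pow_mul_pow_add_pow_mul_pow {R : Type*} [CommRing R] [LinearOrder R]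
    [IsOrderedRing R] {a b c d : R} (ha : 0 ≤ a) (hb : 0 ≤ b) (hc : 0 ≤ c) (hd : 0 ≤ d)
    (h : c + d = a + b) (k : ℕ) :
    (a * b) ^ k * (a + b) ≤ b ^ k * c ^ (k + 1) + a ^ k * d ^ (k + 1) := by
  have tangent {s t : R} (hs : 0 ≤ s) (ht : 0 ≤ t) :
      s ^ (k + 1) + (k + 1) * s ^ k * (t - s) ≤ t ^ (k + 1) := by
    have two_mul_add_eq : 2 * s + (t - s) = s + t := by ring
    have bernoulli := pow_add_mul_le_add_pow hs (two_mul_add_eq ▸ add_nonneg hs ht) (k + 1)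
    rw [add_sub_cancel] at bernoulli
    simpa using bernoulli
  obtain rfl : d = a + b - c := eq_sub_of_add_eq' h
  calc (a * b) ^ k * (a + b)
      = b ^ k * (a ^ (k + 1) + (k + 1) * a ^ k * (c - a))
          + a ^ k * (b ^ (k + 1) + (k + 1) * b ^ k * (a + b - c - b)) := by ring
    _ ≤ b ^ k * c ^ (k + 1) + a ^ k * (a + b - c) ^ (k + 1) := by
      gcongr
      · exact tangent ha hc
      · exact tangent hb hd

theorem integral_pow_mul_one_sub_pow (m n : ℕ) :
    ∫ x in (0 : ℝ)..1, x ^ m * (1 - x) ^ n = (m ! * n ! / (m + n + 1)! : ℝ) := by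
  have beta_eq : Complex.betaIntegral (m + 1) (n + 1) = ∫ x in (0 : ℝ)..1, x ^ m * (1 - x) ^ n := by
    simp only [Complex.betaIntegral, add_sub_cancel_right, Complex.cpow_natCast]
    rw [← intervalIntegral.integral_ofReal]
    push_cast
    rfl
  have gamma_arg : (m + 1 + (n + 1) : ℂ) = (m + n + 1 : ℕ) + 1 := by push_cast; ring
  have re_pos (i : ℕ) : 0 < (i + 1 : ℂ).re := by simpa using i.cast_add_one_pos
  rw [Complex.betaIntegral_eq_Gamma_mul_div _ _ (re_pos m) (re_pos n), gamma_arg] at beta_eq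
  simp only [Complex.Gamma_nat_eq_factorial] at beta_eq
  refine Complex.ofReal_injective (beta_eq.symm.trans ?_)
  push_cast
  rfl

/-- Let `X₁, …, Xₙ` be i.i.d. uniform on `[0,1]` with `n = 2l + k + 1`, and let `Y₁, …, Yₖ₊₁` be
i.i.d. with cdf `G`. Up to the factor `n! / ((l + k)! l!)`, the integral over `x ∈ [0,1]` of
`ksSeparationDensity l k x (G x)` is the probability that at least `n - l` of the `Xᵢ` lie on one
side of all the `Yⱼ`: the first summand comes from `X₍ₙ₋ₗ₎ = x < min Y`, the second one from
`max Y ≤ x = X₍ₗ₊₁₎`. For `l = k = 2` this event is `D₇,₃ ≥ 5 / 7`. -/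
def ksSeparationDensity (l k : ℕ) (x g : ℝ) : ℝ :=
  x ^ (l + k) * (1 - x) ^ l * (1 - g) ^ (k + 1) + x ^ l * (1 - x) ^ (l + k) * g ^ (k + 1)

namespace ksSeparationDensity

variable {l k : ℕ} {x g : ℝ}

theorem self_right : ksSeparationDensity l k x x = x ^ (l + k) * (1 - x) ^ (l + k) := by
  unfold ksSeparationDensity
  ring

theorem self_right_le (hx : x ∈ Set.Icc (0 : ℝ) 1) (hg : g ∈ Set.Icc (0 : ℝ) 1) :
    ksSeparationDensity l k x x ≤ ksSeparationDensity l k x g := by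
  have hx' : 0 ≤ 1 - x := sub_nonneg.2 hx.2
  have hx₀ : 0 ≤ x := hx.1
  calc ksSeparationDensity l k x x
      = (x * (1 - x)) ^ l * (((1 - x) * x) ^ k * (1 - x + x)) := by
        simp only [self_right, mul_pow]
        ring
    _ ≤ (x * (1 - x)) ^ l * (x ^ k * (1 - g) ^ (k + 1) + (1 - x) ^ k * g ^ (k + 1)) := by
      gcongr
      exact mul_pow_mul_add_le_pow_mul_pow_add_pow_mul_pow hx' hx₀ (sub_nonneg.2 hg.2) hg.1
        (by ring) k
    _ = ksSeparationDensity l k x g := by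
      simp only [ksSeparationDensity, mul_pow]
      ring

theorem mem_Icc (hx : x ∈ Set.Icc (0 : ℝ) 1) (hg : g ∈ Set.Icc (0 : ℝ) 1) :
    ksSeparationDensity l k x g ∈ Set.Icc (0 : ℝ) 2 := by
  have monomial_mem {u v w : ℝ} (hu : u ∈ unitInterval) (hv : v ∈ unitInterval)
      (hw : w ∈ unitInterval) (p q r : ℕ) : u ^ p * v ^ q * w ^ r ∈ unitInterval :=
    have hpow {t : ℝ} (ht : t ∈ unitInterval) (i : ℕ) : t ^ i ∈ unitInterval :=
      pow_mem (S := unitInterval.submonoid) ht i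
    unitInterval.mul_mem (unitInterval.mul_mem (hpow hu p) (hpow hv q)) (hpow hw r)
  have hx' := Set.Icc.one_sub_mem hx
  have first := monomial_mem hx hx' (Set.Icc.one_sub_mem hg) (l + k) l (k + 1)
  have second := monomial_mem hx hx' hg l (l + k) (k + 1)
  exact ⟨add_nonneg first.1 second.1, (add_le_add first.2 second.2).trans_eq one_add_one_eq_two⟩

theorem intervalIntegrable {G : ℝ → ℝ} (hGmeas : AEMeasurable G (volume.restrict (Set.Icc 0 1)))
    (hG : ∀ x ∈ Set.Icc (0 : ℝ) 1, G x ∈ Set.Icc (0 : ℝ) 1) :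
    IntervalIntegrable (fun x ↦ ksSeparationDensity l k x (G x)) volume 0 1 := by
  rw [intervalIntegrable_iff_integrableOn_Icc_of_le zero_le_one]
  refine Integrable.of_mem_Icc 0 2 ?_ ?_
  · unfold ksSeparationDensity
    fun_prop
  · filter_upwards [ae_restrict_mem measurableSet_Icc] with x hx using mem_Icc hx (hG x hx)

theorem integral_self_right (l k : ℕ) :
    ∫ x in (0 : ℝ)..1, ksSeparationDensity l k x x = ((l + k)! ^ 2 / (2 * (l + k) + 1)! : ℝ) := by
  simp only [self_right, integral_pow_mul_one_sub_pow, ← two_mul, ← sq]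

theorem integral_self_right_le {G : ℝ → ℝ}
    (hGmeas : AEMeasurable G (volume.restrict (Set.Icc 0 1)))
    (hG : ∀ x ∈ Set.Icc (0 : ℝ) 1, G x ∈ Set.Icc (0 : ℝ) 1) :
    ∫ x in (0 : ℝ)..1, ksSeparationDensity l k x x
      ≤ ∫ x in (0 : ℝ)..1, ksSeparationDensity l k x (G x) :=
  intervalIntegral.integral_mono_on zero_le_one
    (intervalIntegrable aemeasurable_id fun _ ↦ id) (intervalIntegrable hGmeas hG)
    fun x hx ↦ self_right_le hx (hG x hx)

end ksSeparationDensity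

theorem ks_unbiased_seven_three_general (l k : ℕ) {G : ℝ → ℝ}
    (hGmeas : AEMeasurable G (volume.restrict (Set.Icc 0 1)))
    (hG : ∀ x ∈ Set.Icc (0 : ℝ) 1, G x ∈ Set.Icc (0 : ℝ) 1) :
    ((l + k)! ^ 2 / (2 * (l + k) + 1)! : ℝ)
        ≤ ∫ x in (0 : ℝ)..1, ksSeparationDensity l k x (G x) ∧
      ((∀ x ∈ Set.Icc (0 : ℝ) 1, G x = x) →
        ∫ x in (0 : ℝ)..1, ksSeparationDensity l k x (G x)
          = ((l + k)! ^ 2 / (2 * (l + k) + 1)! : ℝ)) := by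
  rw [← ksSeparationDensity.integral_self_right]
  refine ⟨ksSeparationDensity.integral_self_right_le hGmeas hG, fun hG_id ↦ ?_⟩
  refine intervalIntegral.integral_congr fun x hx ↦ ?_
  rw [Set.uIcc_of_le zero_le_one] at hx
  simp only [hG_id x hx]

/-- For `n = 7`, `m = 3`, the two-sample Kolmogorov–Smirnov test is unbiased at level
`α₃ = 1/6`: for every measurable `G : [0,1] → [0,1]`,
`105·∫₀¹ (x⁴(1−x)²(1−G(x))³ + x²(1−x)⁴ G(x)³) dx ≥ 1/6`, with equality if `G(x) = x` on `[0,1]`. -/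
theorem ks_unbiased_seven_three (G : ℝ → ℝ) (hGmeas : Measurable G)
    (hG : ∀ x ∈ Set.Icc (0:ℝ) 1, G x ∈ Set.Icc (0:ℝ) 1) :
    105 * ∫ x in (0:ℝ)..1,
        (x ^ 4 * (1 - x) ^ 2 * (1 - G x) ^ 3 + x ^ 2 * (1 - x) ^ 4 * (G x) ^ 3) ≥ 1 / 6 ∧
    ((∀ x ∈ Set.Icc (0:ℝ) 1, G x = x) →
      105 * ∫ x in (0:ℝ)..1,
        (x ^ 4 * (1 - x) ^ 2 * (1 - G x) ^ 3 + x ^ 2 * (1 - x) ^ 4 * (G x) ^ 3) = 1 / 6) := by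
  have null_value : ((2 + 2)! ^ 2 / (2 * (2 + 2) + 1)! : ℝ) = 1 / 630 := by
    norm_num [Nat.factorial]
  obtain ⟨lower_bound, equality⟩ := ks_unbiased_seven_three_general 2 2 hGmeas.aemeasurable hG
  simp only [null_value, ksSeparationDensity, Nat.reduceAdd] at lower_bound equality
  exact ⟨by linarith, fun hG_id ↦ by linarith [equality hG_id]⟩
end
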